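/- Degree zero descends to the bubbles: for D ≥ 3 and any (D+1)-tuple σ of permutations of {1,…,k}, if σ has degree zero, i.e. F(σ) = D(D−1)/2 · k + D·C(σ), then its D-bubble also has degree zero, i.e. F_D(σ_D) = (D−1)(D−2)/2 · k + (D−1)·C_D(σ_D). -/

import Mathlib

/-- Number of cycles of a permutation counting fixed points: the number of orbits
on `Fin k` of the cyclic group generated by `τ`. -/
noncomputable def cycleCount {k : ℕ} (τ : Equiv.Perm (Fin k)) : ℕ :=
  Nat.card (MulAction.orbitRel.Quotient (Subgroup.zpowers τ) (Fin k))

/-- Total number of faces of the `(D+1)`-colored graph encoded by `σ`: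
`F(σ) = Σ_{c₁ < c₂} c(σ⁽ᶜ¹⁾ ∘ (σ⁽ᶜ²⁾)⁻¹)`. -/
noncomputable def faceCount {k D : ℕ} (σ : Fin (D + 1) → Equiv.Perm (Fin k)) : ℕ :=
  ∑ p ∈ Finset.univ.filter (fun p : Fin (D + 1) × Fin (D + 1) => p.1 < p.2),
    cycleCount (σ p.1 * (σ p.2)⁻¹)

/-- Number of connected components of the `(D+1)`-colored graph encoded by `σ`:
the number of orbits on `Fin k` of the subgroup generated by `(σ⁽⁰⁾)⁻¹ ∘ σ⁽ᶜ⁾`, `1 ≤ c ≤ D`. -/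
noncomputable def compCount {k D : ℕ} (σ : Fin (D + 1) → Equiv.Perm (Fin k)) : ℕ :=
  Nat.card (MulAction.orbitRel.Quotient
    (Subgroup.closure
      {g : Equiv.Perm (Fin k) | ∃ c : Fin (D + 1), c ≠ 0 ∧ g = (σ 0)⁻¹ * σ c}) (Fin k))

/-- Number of faces of the `D`-bubble (colors `1,…,D`) of `σ`:
`F_D(σ_D) = Σ_{1 ≤ c₁ < c₂ ≤ D} c(σ⁽ᶜ¹⁾ ∘ (σ⁽ᶜ²⁾)⁻¹)`. -/
noncomputable def bubbleFaceCount {k D : ℕ} (σ : Fin (D + 1) → Equiv.Perm (Fin k)) : ℕ :=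
  ∑ p ∈ Finset.univ.filter
      (fun p : Fin (D + 1) × Fin (D + 1) => 0 < p.1 ∧ p.1 < p.2),
    cycleCount (σ p.1 * (σ p.2)⁻¹)

/-- Number of connected components of the `D`-bubble of `σ`: the number of orbits
on `Fin k` of the subgroup generated by `(σ⁽¹⁾)⁻¹ ∘ σ⁽ᶜ⁾`, `2 ≤ c ≤ D`. -/
noncomputable def bubbleCompCount {k D : ℕ} (σ : Fin (D + 1) → Equiv.Perm (Fin k)) : ℕ :=
  Nat.card (MulAction.orbitRel.Quotient
    (Subgroup.closure
      {g : Equiv.Perm (Fin k) | ∃ c : Fin (D + 1), 1 < c ∧ g = (σ 1)⁻¹ * σ c}) (Fin k))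

/-!
Orbits are counted by invariant functions: `orbitCount S` is the dimension of the space `V^S` of
rational functions on the vertices fixed by all permutations in `S`. For two permutations `a`, `b`
the map `f ↦ f ∘ b - f` has kernel `V^a ∩ V^b` on `V^{ba}` and, for the standard pairing, takes
values in the annihilator of `V^a + V^b`. Counting dimensions gives
`c(a) + c(b) + c(ba) ≤ k + 2 C(a, b)`, where `C(a, b)` is the number of orbits of the group
generated by `a` and `b`; this says that the genus of a surface is nonnegative.

For two colors in a set `T` of `n` colors and a third color `z ∉ T`, this bounds the faces of the
three-colored subgraph; submodularity of the component number replaces its components by those of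
`T` and `T ∪ {z}`. Summing over all pairs of colors in `T` yields
`n * ω(T) ≤ (n - 1) * ω(T ∪ {z})` for the degree `ω`, so that `ω` is nonnegative and monotone
in the set of colors.
-/

open Equiv Module

section Orbits

variable {α : Type*}

/-- The number of orbits of the group of permutations generated by `S`. -/
noncomputable def orbitCount (S : Set (Perm α)) : ℕ :=
  Nat.card (MulAction.orbitRel.Quotient (Subgroup.closure S) α)

/-- The rational functions invariant under every permutation in `S`. If `α` is finite, they form a
space of dimension `orbitCount S`. -/
def invariantFunctions (S : Set (Perm α)) : Submodule ℚ (α → ℚ) where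
  carrier := {f | ∀ g ∈ S, f ∘ g = f}
  add_mem' hf hg τ hτ := congrArg₂ (· + ·) (hf τ hτ) (hg τ hτ)
  zero_mem' _ _ := rfl
  smul_mem' c _ hf τ hτ := congrArg (c • ·) (hf τ hτ)

lemma mem_invariantFunctions {S : Set (Perm α)} {f : α → ℚ} :
    f ∈ invariantFunctions S ↔ ∀ g ∈ S, f ∘ g = f := Iff.rfl

lemma mem_invariantFunctions_singleton {τ : Perm α} {f : α → ℚ} :
    f ∈ invariantFunctions {τ} ↔ f ∘ τ = f := by
  simp [mem_invariantFunctions]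

lemma invariantFunctions_pair (a b : Perm α) :
    invariantFunctions {a, b} = invariantFunctions {a} ⊓ invariantFunctions {b} := by
  ext f
  simp [mem_invariantFunctions]

lemma invariantFunctions_mul_inf_le (a b : Perm α) :
    invariantFunctions {b * a} ⊓ invariantFunctions {b} ≤
      invariantFunctions {a} ⊓ invariantFunctions {b} := by
  rintro f ⟨hba, hb⟩
  refine ⟨?_, hb⟩
  rw [SetLike.mem_coe, mem_invariantFunctions_singleton] at hba hb ⊢
  rwa [Perm.coe_mul, ← Function.comp_assoc, hb] at hba

lemma invariantFunctions_closure (S : Set (Perm α)) :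
    invariantFunctions (Subgroup.closure S : Set (Perm α)) = invariantFunctions S := by
  refine le_antisymm (fun f hf g hg => hf g (Subgroup.subset_closure hg)) fun f hf g hg => ?_
  induction hg using Subgroup.closure_induction with
  | mem g hg => exact hf g hg
  | one => rfl
  | mul g h _ _ hg hh => rw [Perm.coe_mul, ← Function.comp_assoc, hg, hh]
  | inv g _ hg => rw [Perm.inv_def, comp_symm_eq, hg]

lemma range_funLeft_orbitRel (G : Subgroup (Perm α)) :
    LinearMap.range (LinearMap.funLeft ℚ ℚ (Quotient.mk (MulAction.orbitRel G α))) =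
      invariantFunctions (G : Set (Perm α)) := by
  ext f
  constructor
  · rintro ⟨h, rfl⟩ g hg
    funext x
    exact congrArg h (Quotient.sound ⟨⟨g, hg⟩, rfl⟩)
  · intro hf
    refine ⟨Quotient.lift f ?_, rfl⟩
    rintro _ y ⟨⟨g, hg⟩, rfl⟩
    exact congrFun (hf g hg) y

variable [Finite α]

lemma orbitCount_eq_finrank (S : Set (Perm α)) :
    orbitCount S = finrank ℚ (invariantFunctions S) := by
  have := Fintype.ofFinite (MulAction.orbitRel.Quotient (Subgroup.closure S) α)
  rw [← invariantFunctions_closure, ← range_funLeft_orbitRel,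
    LinearMap.finrank_range_of_inj (LinearMap.funLeft_injective_of_surjective ℚ ℚ _
      Quotient.mk_surjective)]
  exact (Nat.card_eq_fintype_card.trans (finrank_fintype_fun_eq_card ℚ).symm)

lemma orbitCount_mul_comm (a b : Perm α) : orbitCount {a * b} = orbitCount {b * a} := by
  simp only [orbitCount_eq_finrank]
  have hmap : invariantFunctions {b * a} =
      (invariantFunctions {a * b}).map (LinearEquiv.funCongrLeft ℚ ℚ a).toLinearMap := by
    ext f
    rw [Submodule.mem_map_equiv, mem_invariantFunctions_singleton,
      mem_invariantFunctions_singleton]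
    change (f ∘ b) ∘ a = f ↔ ((f ∘ a.symm) ∘ a) ∘ b = f ∘ a.symm
    rw [Function.comp_assoc f a.symm a, a.symm_comp_self, Function.comp_id, eq_comp_symm]
  rw [hmap, LinearEquiv.finrank_map_eq]

end Orbits

section Genus

lemma finrank_map_add_finrank_inf_ker {K V W : Type*} [DivisionRing K] [AddCommGroup V]
    [Module K V] [AddCommGroup W] [Module K W] [FiniteDimensional K V] (φ : V →ₗ[K] W)
    (P : Submodule K V) :
    finrank K (P.map φ) + finrank K (P ⊓ LinearMap.ker φ : Submodule K V) = finrank K P := by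
  rw [← LinearMap.range_domRestrict, ← (φ.domRestrict P).finrank_range_add_finrank_ker,
    LinearMap.ker_domRestrict, ← Submodule.map_comap_subtype, Submodule.finrank_map_subtype_eq]

lemma finrank_inf_add_finrank_le {K V : Type*} [DivisionRing K] [AddCommGroup V] [Module K V]
    [FiniteDimensional K V] {W U : Submodule K V} (h : W ≤ U) (P : Submodule K V) :
    finrank K (U ⊓ P : Submodule K V) + finrank K W ≤
      finrank K U + finrank K (W ⊓ P : Submodule K V) := by
  rw [← Submodule.finrank_sup_add_finrank_inf_eq (U ⊓ P) W, inf_right_comm, inf_eq_right.2 h]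
  gcongr
  exact Submodule.finrank_mono (sup_le inf_le_left h)

variable {α : Type*} [Fintype α] [DecidableEq α]

/-- The functional `g ↦ ∑ x, (f (τ x) - f x) * g x` attached to a function `f`. -/
def coboundary (τ : Perm α) : (α → ℚ) →ₗ[ℚ] Dual ℚ (α → ℚ) :=
  (dotProductEquiv ℚ α).toLinearMap ∘ₗ (LinearMap.funLeft ℚ ℚ τ - LinearMap.id)

lemma coboundary_apply (τ : Perm α) (f g : α → ℚ) :
    coboundary τ f g = (f ∘ τ) ⬝ᵥ g - f ⬝ᵥ g :=
  sub_dotProduct (f ∘ τ) f g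

lemma ker_coboundary (τ : Perm α) : LinearMap.ker (coboundary τ) = invariantFunctions {τ} := by
  ext f
  rw [coboundary, LinearEquiv.ker_comp, LinearMap.mem_ker, mem_invariantFunctions_singleton]
  exact sub_eq_zero

lemma map_coboundary_le_dualAnnihilator (a b : Perm α) :
    (invariantFunctions {b * a}).map (coboundary b) ≤
      (invariantFunctions {a} ⊔ invariantFunctions {b}).dualAnnihilator := by
  rw [Submodule.dualAnnihilator_sup_eq]
  rintro _ ⟨f, hf, rfl⟩
  rw [SetLike.mem_coe, mem_invariantFunctions_singleton, Perm.coe_mul, ← Function.comp_assoc] at hf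
  simp only [Submodule.mem_inf, Submodule.mem_dualAnnihilator, mem_invariantFunctions_singleton,
    coboundary_apply, sub_eq_zero]
  constructor
  · intro g hg
    calc (f ∘ b) ⬝ᵥ g = ((f ∘ b) ∘ a) ⬝ᵥ (g ∘ a) := (comp_equiv_dotProduct_comp_equiv _ _ a).symm
      _ = f ⬝ᵥ g := by rw [hf, hg]
  · intro g hg
    calc (f ∘ b) ⬝ᵥ g = (f ∘ b) ⬝ᵥ (g ∘ b) := by rw [hg]
      _ = f ⬝ᵥ g := comp_equiv_dotProduct_comp_equiv f g b

end Genus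

theorem orbitCount_add_orbitCount_mul_le {α : Type*} [Finite α] (a b : Perm α) :
    orbitCount {a} + orbitCount {b} + orbitCount {b * a} ≤
      Nat.card α + 2 * orbitCount {a, b} := by
  classical
  have := Fintype.ofFinite α
  have hannih := Submodule.finrank_mono (map_coboundary_le_dualAnnihilator a b)
  have hinf := Submodule.finrank_mono (invariantFunctions_mul_inf_le a b)
  have hrank := finrank_map_add_finrank_inf_ker (coboundary b) (invariantFunctions {b * a})
  have hdual := Subspace.finrank_add_finrank_dualAnnihilator_eq
    (invariantFunctions {a} ⊔ invariantFunctions {b})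
  have hsup := Submodule.finrank_sup_add_finrank_inf_eq
    (invariantFunctions {a}) (invariantFunctions {b})
  rw [ker_coboundary] at hrank
  rw [finrank_fintype_fun_eq_card, ← Nat.card_eq_fintype_card] at hdual
  simp only [orbitCount_eq_finrank]
  rw [invariantFunctions_pair]
  omega

section Pairs

open Finset

variable {ι M : Type*} [AddCommMonoid M]

lemma sum_powersetCard_two_insert [DecidableEq ι] {T : Finset ι} {z : ι} (hz : z ∉ T)
    (f : Finset ι → M) :
    ∑ e ∈ (insert z T).powersetCard 2, f e = ∑ e ∈ T.powersetCard 2, f e + ∑ c ∈ T, f {z, c} := by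
  rw [powersetCard_succ_insert hz, sum_union, powersetCard_one, sum_image, sum_map]
  · rfl
  · simp only [coe_map]
    rintro _ ⟨c, hc, rfl⟩ _ ⟨d, -, rfl⟩ h
    replace h : ({z, c} : Finset ι) = {z, d} := h
    have hcd : c ∈ ({z, d} : Finset ι) := h ▸ mem_insert_of_mem (mem_singleton_self c)
    rcases mem_insert.1 hcd with rfl | hcd
    · exact absurd hc hz
    · rw [mem_singleton.1 hcd]
  · rw [disjoint_right]
    simp only [mem_image, mem_powersetCard]
    grind

lemma sum_powersetCard_two_sum {R : Type*} [Ring R] (T : Finset ι) (f : ι → R) :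
    ∑ e ∈ T.powersetCard 2, ∑ c ∈ e, f c = (#T - 1) * ∑ c ∈ T, f c := by
  classical
  induction T using Finset.induction_on with
  | empty => rw [powersetCard_eq_empty.2 (by simp)]; simp
  | insert z T hz ih =>
    have hpair : ∀ c ∈ T, ∑ d ∈ {z, c}, f d = f z + f c := fun c hc =>
      sum_pair (ne_of_mem_of_not_mem hc hz).symm
    rw [sum_powersetCard_two_insert hz, ih, sum_congr rfl hpair, sum_add_distrib, sum_const,
      sum_insert hz, card_insert_of_notMem hz]
    push_cast
    rw [nsmul_eq_mul]
    noncomm_ring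

lemma sum_powersetCard_two_eq_sum_lt [LinearOrder ι] (T : Finset ι) (f : Finset ι → M) :
    ∑ e ∈ T.powersetCard 2, f e = ∑ p ∈ T ×ˢ T with p.1 < p.2, f {p.1, p.2} := by
  symm
  refine sum_nbij (fun p => {p.1, p.2}) ?_ ?_ ?_ fun _ _ => rfl
  · rintro ⟨a, b⟩ h
    simp only [mem_filter, mem_product] at h
    rw [mem_powersetCard, card_pair h.2.ne]
    grind
  · rintro ⟨a, b⟩ hab ⟨c, d⟩ hcd h
    have hlt : a < b := (mem_filter.1 hab).2
    have hlt' : c < d := (mem_filter.1 hcd).2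
    have hset : ({a, b} : Set ι) = {c, d} := by simpa only [coe_pair] using congrArg SetLike.coe h
    rcases Set.pair_eq_pair_iff.1 hset with ⟨rfl, rfl⟩ | ⟨rfl, rfl⟩
    · rfl
    · exact absurd hlt hlt'.asymm
  · intro e he
    obtain ⟨hT, hcard⟩ := mem_powersetCard.1 he
    obtain ⟨a, b, hab, rfl⟩ := card_eq_two.1 hcard
    obtain ⟨ha, hb⟩ : a ∈ T ∧ b ∈ T := by simpa [insert_subset_iff] using hT
    rcases hab.lt_or_gt with h | h
    · exact ⟨(a, b), by simp [ha, hb, h], rfl⟩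
    · exact ⟨(b, a), by simp [ha, hb, h], pair_comm b a⟩

end Pairs

section ColoredGraph

variable {ι α : Type*}

/-- The permutations of the white vertices that follow an edge with color in `T` and go back along
an edge with color in `T`. The orbits of the group that they generate are the white vertices of
the connected components of the subgraph of `σ` with colors in `T`. -/
def colorPerms (σ : ι → Perm α) (T : Finset ι) : Set (Perm α) :=
  {g | ∃ a ∈ T, ∃ b ∈ T, g = (σ a)⁻¹ * σ b}

/-- The number of connected components of the subgraph of `σ` with colors in `T`. -/
noncomputable def colorComponentCount (σ : ι → Perm α) (T : Finset ι) : ℕ :=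
  orbitCount (colorPerms σ T)

/-- The number of faces, i.e. of two-colored cycles, of the subgraph of `σ` with colors in `T`. -/
noncomputable def colorFaceCount (σ : ι → Perm α) (T : Finset ι) : ℕ :=
  ∑ e ∈ T.powersetCard 2, colorComponentCount σ e

/-- The degree of the subgraph of `σ` with colors in `T`. It is taken in `ℚ`, so that neither the
subtractions nor the division truncate. -/
noncomputable def colorDegree (σ : ι → Perm α) (T : Finset ι) : ℚ :=
  (T.card - 1) * (T.card - 2) / 2 * Nat.card α + (T.card - 1) * colorComponentCount σ T -
    colorFaceCount σ T

lemma comp_inv_mul_eq_iff {β : Type*} (g h : Perm α) (f : α → β) :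
    f ∘ ⇑(g⁻¹ * h) = f ↔ f ∘ g.symm = f ∘ h.symm := by
  rw [Perm.coe_mul, ← Function.comp_assoc, eq_comp_symm, Perm.inv_def]

lemma mem_invariantFunctions_colorPerms {σ : ι → Perm α} {T : Finset ι} {f : α → ℚ} :
    f ∈ invariantFunctions (colorPerms σ T) ↔
      ∀ a ∈ T, ∀ b ∈ T, f ∘ (σ a).symm = f ∘ (σ b).symm := by
  constructor
  · exact fun h a ha b hb => (comp_inv_mul_eq_iff _ _ f).1 (h _ ⟨a, ha, b, hb, rfl⟩)
  · rintro h _ ⟨a, ha, b, hb, rfl⟩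
    exact (comp_inv_mul_eq_iff _ _ f).2 (h a ha b hb)

lemma invariantFunctions_colorPerms_eq (σ : ι → Perm α) {T : Finset ι} {c : ι} (hc : c ∈ T) :
    invariantFunctions (colorPerms σ T) =
      invariantFunctions {g | ∃ b ∈ T, b ≠ c ∧ g = (σ c)⁻¹ * σ b} := by
  ext f
  rw [mem_invariantFunctions_colorPerms]
  constructor
  · rintro h _ ⟨b, hb, -, rfl⟩
    exact (comp_inv_mul_eq_iff _ _ f).2 (h c hc b hb)
  · intro h
    have hbase : ∀ b ∈ T, f ∘ (σ c).symm = f ∘ (σ b).symm := fun b hb => by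
      by_cases hbc : b = c
      · rw [hbc]
      · exact (comp_inv_mul_eq_iff _ _ f).1 (h _ ⟨b, hb, hbc, rfl⟩)
    exact fun a ha b hb => (hbase a ha).symm.trans (hbase b hb)

lemma invariantFunctions_colorPerms_pair [DecidableEq ι] (σ : ι → Perm α) (a b : ι) :
    invariantFunctions (colorPerms σ {a, b}) = invariantFunctions {(σ a)⁻¹ * σ b} := by
  ext f
  rw [mem_invariantFunctions_singleton, comp_inv_mul_eq_iff, mem_invariantFunctions_colorPerms]
  exact ⟨fun h => h a (by simp) b (by simp), fun h => by simp [h]⟩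

lemma invariantFunctions_colorPerms_union [DecidableEq ι] (σ : ι → Perm α) {S T : Finset ι} {c : ι}
    (hS : c ∈ S) (hT : c ∈ T) :
    invariantFunctions (colorPerms σ (S ∪ T)) =
      invariantFunctions (colorPerms σ S) ⊓ invariantFunctions (colorPerms σ T) := by
  ext f
  simp only [Submodule.mem_inf, mem_invariantFunctions_colorPerms]
  constructor
  · exact fun h => ⟨by grind, by grind⟩
  · rintro ⟨hfS, hfT⟩
    have hbase : ∀ a ∈ S ∪ T, f ∘ (σ a).symm = f ∘ (σ c).symm := fun a ha =>
      (Finset.mem_union.1 ha).elim (hfS a · c hS) (hfT a · c hT)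
    exact fun a ha b hb => (hbase a ha).trans (hbase b hb).symm

variable [Finite α]

lemma colorComponentCount_eq_orbitCount (σ : ι → Perm α) {T : Finset ι} {c : ι} (hc : c ∈ T) :
    colorComponentCount σ T = orbitCount {g | ∃ b ∈ T, b ≠ c ∧ g = (σ c)⁻¹ * σ b} := by
  rw [colorComponentCount, orbitCount_eq_finrank, invariantFunctions_colorPerms_eq σ hc,
    ← orbitCount_eq_finrank]

lemma colorComponentCount_of_card_le_one (σ : ι → Perm α) {T : Finset ι} (hT : T.card ≤ 1) :
    colorComponentCount σ T = Nat.card α := by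
  have := Fintype.ofFinite α
  have htop : invariantFunctions (colorPerms σ T) = ⊤ :=
    eq_top_iff.2 fun f _ => mem_invariantFunctions_colorPerms.2 fun a ha b hb => by
      rw [Finset.card_le_one.1 hT a ha b hb]
  rw [colorComponentCount, orbitCount_eq_finrank, htop, finrank_top, finrank_fintype_fun_eq_card,
    Nat.card_eq_fintype_card]

lemma colorDegree_eq_zero_of_card_le_two (σ : ι → Perm α) {T : Finset ι} (hT : T.card ≤ 2) :
    colorDegree σ T = 0 := by
  rcases hT.lt_or_eq with hlt | hcard
  · have hfaces : colorFaceCount σ T = 0 := by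
      rw [colorFaceCount, Finset.powersetCard_eq_empty.2 hlt, Finset.sum_empty]
    rw [colorDegree, hfaces, colorComponentCount_of_card_le_one σ (Nat.lt_succ_iff.1 hlt)]
    interval_cases T.card <;> simp
  · have hfaces : colorFaceCount σ T = colorComponentCount σ T := by
      rw [colorFaceCount, ← hcard, Finset.powersetCard_self, Finset.sum_singleton]
    rw [colorDegree, hfaces, hcard]
    norm_num

section DecidableEq

variable [DecidableEq ι]

lemma colorComponentCount_pair (σ : ι → Perm α) (a b : ι) :
    colorComponentCount σ {a, b} = orbitCount {(σ a)⁻¹ * σ b} := by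
  rw [colorComponentCount, orbitCount_eq_finrank, invariantFunctions_colorPerms_pair,
    ← orbitCount_eq_finrank]

lemma colorComponentCount_triple (σ : ι → Perm α) (a b c : ι) :
    colorComponentCount σ {a, b, c} = orbitCount {(σ b)⁻¹ * σ c, (σ a)⁻¹ * σ b} := by
  have hunion : ({a, b, c} : Finset ι) = {b, c} ∪ {a, b} := by grind
  rw [colorComponentCount, orbitCount_eq_finrank, hunion,
    invariantFunctions_colorPerms_union σ (c := b) (by simp) (by simp),
    invariantFunctions_colorPerms_pair, invariantFunctions_colorPerms_pair,
    ← invariantFunctions_pair, ← orbitCount_eq_finrank]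

lemma colorComponentCount_union_add_le (σ : ι → Perm α) {R S T : Finset ι} {c : ι} (hR : c ∈ R)
    (hS : c ∈ S) (hST : S ⊆ T) :
    colorComponentCount σ (S ∪ R) + colorComponentCount σ T ≤
      colorComponentCount σ S + colorComponentCount σ (T ∪ R) := by
  simp only [colorComponentCount, orbitCount_eq_finrank]
  rw [invariantFunctions_colorPerms_union σ hS hR,
    invariantFunctions_colorPerms_union σ (hST hS) hR]
  refine finrank_inf_add_finrank_le (fun f hf => ?_) _
  rw [mem_invariantFunctions_colorPerms] at hf ⊢
  exact fun a ha b hb => hf a (hST ha) b (hST hb)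

lemma colorComponentCount_pairs_add_le (σ : ι → Perm α) (a b c : ι) :
    colorComponentCount σ {a, b} + colorComponentCount σ {a, c} + colorComponentCount σ {b, c} ≤
      Nat.card α + 2 * colorComponentCount σ {a, b, c} := by
  have h := orbitCount_add_orbitCount_mul_le ((σ b)⁻¹ * σ c) ((σ a)⁻¹ * σ b)
  rw [mul_assoc, mul_inv_cancel_left, ← colorComponentCount_triple] at h
  simp only [colorComponentCount_pair]
  omega

lemma sum_colorComponentCount_insert_le (σ : ι → Perm α) {T e : Finset ι} (z : ι)
    (he : e ∈ T.powersetCard 2) :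
    ∑ c ∈ e, colorComponentCount σ {z, c} + 2 * colorComponentCount σ T ≤
      Nat.card α + colorComponentCount σ e + 2 * colorComponentCount σ (insert z T) := by
  obtain ⟨heT, hcard⟩ := Finset.mem_powersetCard.1 he
  obtain ⟨a, b, hab, rfl⟩ := Finset.card_eq_two.1 hcard
  have hgenus := colorComponentCount_pairs_add_le σ z a b
  have hmod := colorComponentCount_union_add_le σ (R := {z, a}) (c := a) (by simp) (by simp) heT
  rw [show ({a, b} ∪ {z, a} : Finset ι) = {z, a, b} by grind,
    show T ∪ {z, a} = insert z T by grind] at hmod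
  rw [Finset.sum_pair hab]
  omega

lemma card_mul_colorDegree_le (σ : ι → Perm α) {T : Finset ι} {z : ι} (hz : z ∉ T) :
    (T.card : ℚ) * colorDegree σ T ≤ (T.card - 1) * colorDegree σ (insert z T) := by
  have hfaces : (colorFaceCount σ T : ℚ) =
      ∑ e ∈ T.powersetCard 2, (colorComponentCount σ e : ℚ) := Nat.cast_sum _ _
  have hinsert : (colorFaceCount σ (insert z T) : ℚ) =
      colorFaceCount σ T + ∑ c ∈ T, (colorComponentCount σ {z, c} : ℚ) := by
    rw [colorFaceCount, sum_powersetCard_two_insert hz, hfaces, Nat.cast_add,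
      Nat.cast_sum, Nat.cast_sum]
  have hsum : (T.card - 1) * ∑ c ∈ T, (colorComponentCount σ {z, c} : ℚ) +
        T.card * (T.card - 1) / 2 * (2 * colorComponentCount σ T) ≤
      T.card * (T.card - 1) / 2 * Nat.card α + colorFaceCount σ T +
        T.card * (T.card - 1) / 2 * (2 * colorComponentCount σ (insert z T)) := by
    have hpairs := Finset.sum_le_sum fun e he =>
      Nat.cast_le (α := ℚ).2 (sum_colorComponentCount_insert_le σ z (T := T) (e := e) he)
    push_cast at hpairs
    simpa only [Finset.sum_add_distrib, Finset.sum_const, Finset.card_powersetCard, nsmul_eq_mul,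
      Nat.cast_choose_two, sum_powersetCard_two_sum T fun c => (colorComponentCount σ {z, c} : ℚ),
      ← hfaces] using hpairs
  simp only [colorDegree, Finset.card_insert_of_notMem hz, hinsert]
  push_cast
  linarith

end DecidableEq

lemma colorDegree_nonneg (σ : ι → Perm α) (T : Finset ι) : 0 ≤ colorDegree σ T := by
  classical
  induction T using Finset.induction_on with
  | empty => exact (colorDegree_eq_zero_of_card_le_two σ (by simp)).ge
  | insert z T hz ih =>
    rcases le_or_gt T.card 1 with hT | hT
    · refine (colorDegree_eq_zero_of_card_le_two σ ?_).ge
      rw [Finset.card_insert_of_notMem hz]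
      omega
    · have hpos : (0 : ℚ) < T.card - 1 := sub_pos.2 (mod_cast hT)
      exact nonneg_of_mul_nonneg_right
        ((mul_nonneg T.card.cast_nonneg ih).trans (card_mul_colorDegree_le σ hz)) hpos

lemma colorDegree_mono (σ : ι → Perm α) : Monotone (colorDegree σ) := by
  classical
  refine (monotone_iff_forall_covBy _).2 fun S T hST => ?_
  obtain ⟨z, hz, rfl⟩ := Finset.covBy_iff_exists_insert.1 hST
  rcases S.card.eq_zero_or_pos with hS | hS
  · rw [colorDegree_eq_zero_of_card_le_two σ (by omega)]
    exact colorDegree_nonneg σ _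
  · have hpos : (0 : ℚ) < S.card := mod_cast hS
    refine le_of_mul_le_mul_left ((card_mul_colorDegree_le σ hz).trans ?_) hpos
    gcongr
    · exact colorDegree_nonneg σ _
    · exact sub_le_self _ zero_le_one

theorem degree_zero_descends_general (σ : ι → Perm α) {S T : Finset ι} (hST : S ⊆ T)
    (hT : colorDegree σ T = 0) : colorDegree σ S = 0 :=
  ((colorDegree_mono σ hST).trans_eq hT).antisymm (colorDegree_nonneg σ S)

end ColoredGraph

section Bridge

lemma colorDegree_eq_zero_iff {ι α : Type*} (σ : ι → Perm α) {T : Finset ι} {n : ℕ}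
    (hT : T.card = n + 1) :
    colorDegree σ T = 0 ↔
      colorFaceCount σ T = n * (n - 1) / 2 * Nat.card α + n * colorComponentCount σ T := by
  rw [colorDegree, hT, sub_eq_zero, eq_comm, ← Nat.choose_two_right, ← Nat.cast_inj (R := ℚ)]
  push_cast [Nat.cast_choose_two]
  ring_nf

variable {k D : ℕ} (σ : Fin (D + 1) → Perm (Fin k))

lemma cycleCount_mul_inv (a b : Fin (D + 1)) :
    cycleCount (σ a * (σ b)⁻¹) = colorComponentCount σ {a, b} := by
  rw [cycleCount, Subgroup.zpowers_eq_closure, ← orbitCount, orbitCount_mul_comm, Finset.pair_comm,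
    colorComponentCount_pair]

lemma faceCount_eq_colorFaceCount : faceCount σ = colorFaceCount σ Finset.univ := by
  rw [colorFaceCount, sum_powersetCard_two_eq_sum_lt, Finset.univ_product_univ, faceCount]
  exact Finset.sum_congr rfl fun p _ => cycleCount_mul_inv σ p.1 p.2

lemma bubbleFaceCount_eq_colorFaceCount :
    bubbleFaceCount σ = colorFaceCount σ (Finset.univ.erase 0) := by
  rw [colorFaceCount, sum_powersetCard_two_eq_sum_lt, bubbleFaceCount]
  refine Finset.sum_congr ?_ fun p _ => cycleCount_mul_inv σ p.1 p.2
  ext p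
  simp only [Finset.mem_filter, Finset.mem_univ, true_and, Finset.mem_product, Finset.mem_erase,
    and_true, ← Fin.pos_iff_ne_zero]
  exact ⟨fun h => ⟨⟨h.1, h.1.trans h.2⟩, h.2⟩, fun h => ⟨h.1.1, h.2⟩⟩

lemma compCount_eq_colorComponentCount : compCount σ = colorComponentCount σ Finset.univ := by
  rw [colorComponentCount_eq_orbitCount σ (Finset.mem_univ 0)]
  simp only [Finset.mem_univ, true_and]
  rfl

lemma bubbleCompCount_eq_colorComponentCount (hD : 1 ≤ D) :
    bubbleCompCount σ = colorComponentCount σ (Finset.univ.erase 0) := by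
  have hlt : ∀ b : Fin (D + 1), 1 < b ↔ b ≠ 0 ∧ b ≠ 1 := by
    intro b
    rw [Fin.lt_def, Ne, Ne, Fin.ext_iff, Fin.ext_iff, Fin.val_one', Fin.val_zero,
      Nat.mod_eq_of_lt (by omega)]
    omega
  have hone : (1 : Fin (D + 1)) ∈ Finset.univ.erase 0 := by
    rw [Finset.mem_erase, Ne, Fin.one_eq_zero_iff]
    exact ⟨by omega, Finset.mem_univ 1⟩
  rw [colorComponentCount_eq_orbitCount σ hone]
  simp only [Finset.mem_erase, Finset.mem_univ, and_true, ← and_assoc, ← hlt]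
  rfl

lemma colorDegree_univ_eq_zero_iff :
    colorDegree σ Finset.univ = 0 ↔ faceCount σ = D * (D - 1) / 2 * k + D * compCount σ := by
  rw [colorDegree_eq_zero_iff σ (Finset.card_fin (D + 1)), faceCount_eq_colorFaceCount,
    compCount_eq_colorComponentCount, Nat.card_fin]

lemma colorDegree_erase_zero_eq_zero_iff (hD : 1 ≤ D) :
    colorDegree σ (Finset.univ.erase 0) = 0 ↔
      bubbleFaceCount σ = (D - 1) * (D - 2) / 2 * k + (D - 1) * bubbleCompCount σ := by
  have hcard : (Finset.univ.erase (0 : Fin (D + 1))).card = D - 1 + 1 := by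
    rw [Finset.card_erase_of_mem (Finset.mem_univ 0), Finset.card_fin]
    omega
  rw [colorDegree_eq_zero_iff σ hcard, bubbleFaceCount_eq_colorFaceCount,
    bubbleCompCount_eq_colorComponentCount σ hD, Nat.card_fin, Nat.sub_sub]

end Bridge

/-- Degree zero descends to the bubbles: if `σ` has degree zero, i.e.
`F(σ) = D(D−1)/2·k + D·C(σ)`, then so does its `D`-bubble, i.e.
`F_D(σ_D) = (D−1)(D−2)/2·k + (D−1)·C_D(σ_D)`. -/
theorem degree_zero_descends (k D : ℕ) (hk : 1 ≤ k) (hD : 3 ≤ D)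
    (σ : Fin (D + 1) → Equiv.Perm (Fin k))
    (hdeg : faceCount σ = D * (D - 1) / 2 * k + D * compCount σ) :
    bubbleFaceCount σ = (D - 1) * (D - 2) / 2 * k + (D - 1) * bubbleCompCount σ :=
  (colorDegree_erase_zero_eq_zero_iff σ (by omega)).1 <|
    degree_zero_descends_general σ (Finset.erase_subset 0 _) <|
      (colorDegree_univ_eq_zero_iff σ).2 hdeg
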